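/- Let D be an integral domain and ⋆ a (semi)star operation on D (i.e., a semistar operation with D^⋆ = D). Then D is a ⋆-Dedekind domain if and only if D is a Krull domain and ⋆_f = t (i.e., E^{⋆_f} = E^t for every nonzero D-submodule E of K). -/

import Mathlib

open scoped Pointwise

section SemistarDefs

variable {D : Type*} [CommRing D] [IsDomain D]
variable {K : Type*} [Field K] [Algebra D K] [IsFractionRing D K]

/-- `star` is a semistar operation on the integral domain `D` with quotient field `K`:
a map on (nonzero) `D`-submodules of `K` satisfying `(xE)^⋆ = x·E^⋆`, monotonicity,
extensivity and idempotence. -/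
structure IsSemistarOperation (star : Submodule D K → Submodule D K) : Prop where
  ne_bot : ∀ {E : Submodule D K}, E ≠ ⊥ → star E ≠ ⊥
  map_smul : ∀ (x : K), x ≠ 0 → ∀ {E : Submodule D K}, E ≠ ⊥ →
    star (Submodule.map (LinearMap.mulLeft D x) E) = Submodule.map (LinearMap.mulLeft D x) (star E)
  mono : ∀ {E F : Submodule D K}, E ≠ ⊥ → F ≠ ⊥ → E ≤ F → star E ≤ star F
  le_star : ∀ {E : Submodule D K}, E ≠ ⊥ → E ≤ star E
  star_star : ∀ {E : Submodule D K}, E ≠ ⊥ → star (star E) = star E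

/-- The image in `K` of an ideal `I` of `D`, as a `D`-submodule of `K`. -/
def idealExt (K : Type*) [Field K] [Algebra D K] (I : Ideal D) : Submodule D K :=
  Submodule.map (Algebra.linearMap D K) I

/-- `I` is a quasi-⋆-ideal: a nonzero ideal of `D` with `I = I^⋆ ∩ D`. -/
def QuasiStarIdeal (star : Submodule D K → Submodule D K) (I : Ideal D) : Prop :=
  I ≠ ⊥ ∧ Submodule.comap (Algebra.linearMap D K) (star (idealExt K I)) = I

/-- `P` is a quasi-⋆-prime: a prime ideal which is a quasi-⋆-ideal. -/
def QuasiStarPrime (star : Submodule D K → Submodule D K) (P : Ideal D) : Prop :=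
  P.IsPrime ∧ QuasiStarIdeal star P

/-- `M` is a quasi-⋆-maximal ideal: maximal in the set of proper quasi-⋆-ideals of `D`. -/
def QuasiStarMaximal (star : Submodule D K → Submodule D K) (M : Ideal D) : Prop :=
  QuasiStarIdeal star M ∧ M ≠ ⊤ ∧
    ∀ J : Ideal D, QuasiStarIdeal star J → J ≠ ⊤ → M ≤ J → J = M

/-- The finite-type semistar operation `⋆_f` associated to `⋆`:
`E^{⋆_f} = ⋃ { F^⋆ : F nonzero finitely generated, F ⊆ E }`. -/
def finTypeOp (star : Submodule D K → Submodule D K) : Submodule D K → Submodule D K :=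
  fun E => ⨆ (F : Submodule D K) (_ : F ≠ ⊥) (_ : F.FG) (_ : F ≤ E), star F

/-- The extension `E·D_Q` of a `D`-submodule `E` of `K` to the localization of `D` at
(the complement of) `Q`, described as `{ x ∈ K : s·x ∈ E for some s ∉ Q }`. -/
def extendToPrime (Q : Ideal D) (E : Submodule D K) : Submodule D K :=
  Submodule.span D {x : K | ∃ s : D, s ∉ Q ∧ algebraMap D K s * x ∈ E}

/-- The stable semistar operation of finite type `⋆̃` associated to `⋆`:
`E^⋆̃ = ⋂ { E·D_Q : Q a quasi-⋆_f-maximal ideal of D }`. -/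
def stableOp (star : Submodule D K → Submodule D K) : Submodule D K → Submodule D K :=
  fun E => ⨅ (Q : Ideal D) (_ : QuasiStarMaximal (finTypeOp star) Q), extendToPrime Q E

/-- A rank-one discrete valuation ring: a (domain which is a) local PID which is not a field. -/
def IsDVR (R : Type*) [CommRing R] : Prop :=
  ∃ h : IsDomain R, @IsDiscreteValuationRing R _ h

/-- A valuation domain. -/
def IsValuationDomain (R : Type*) [CommRing R] : Prop :=
  ∃ h : IsDomain R, @ValuationRing R _ h

/-- `D` is a ⋆-almost Dedekind domain: `D_M` is a rank-one discrete valuation ring for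
every quasi-⋆_f-maximal ideal `M` of `D`. -/
def StarADD (star : Submodule D K → Submodule D K) : Prop :=
  ∀ (M : Ideal D) [M.IsPrime], QuasiStarMaximal (finTypeOp star) M →
    IsDVR (Localization.AtPrime M)

/-- `D` is a Prüfer ⋆-multiplication domain: `D_M` is a valuation domain for every
quasi-⋆_f-maximal ideal `M` of `D`. -/
def StarPMD (star : Submodule D K → Submodule D K) : Prop :=
  ∀ (M : Ideal D) [M.IsPrime], QuasiStarMaximal (finTypeOp star) M →
    IsValuationDomain (Localization.AtPrime M)

/-- `D` is ⋆-Noetherian: ascending chain condition on quasi-⋆-ideals. -/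
def StarNoetherian (star : Submodule D K → Submodule D K) : Prop :=
  ∀ c : ℕ →o Ideal D, (∀ n, QuasiStarIdeal star (c n)) → ∃ n, ∀ m, n ≤ m → c m = c n

/-- `D` is a ⋆-Dedekind domain: ⋆-Noetherian and a P⋆MD. -/
def StarDedekind (star : Submodule D K → Submodule D K) : Prop :=
  StarNoetherian star ∧ StarPMD star

/-- `D` has the ⋆_f-finite character property: every nonzero element of `D` lies in only
finitely many quasi-⋆_f-maximal ideals. -/
def StarFiniteCharacter (star : Submodule D K → Submodule D K) : Prop :=
  ∀ d : D, d ≠ 0 → {M : Ideal D | QuasiStarMaximal (finTypeOp star) M ∧ d ∈ M}.Finite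

/-- The `v`-operation `E ↦ (D : (D : E))`. -/
def vOp : Submodule D K → Submodule D K := fun E => 1 / (1 / E)

/-- A nonzero `D`-submodule `E` of `K` is quasi-∗-invertible if `(E·(D^∗ : E))^∗ = D^∗`. -/
def QuasiStarInvertible (star : Submodule D K → Submodule D K) (E : Submodule D K) : Prop :=
  star (E * (star 1 / E)) = star (1 : Submodule D K)

/-- `D` has the ∗-cancellation law: for nonzero fractional ideals `A`, `B`, `C`,
`(AB)^∗ = (AC)^∗` implies `B^∗ = C^∗`. -/
def StarCancellation (star : Submodule D K → Submodule D K) : Prop :=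
  ∀ A B C : Submodule D K, A ≠ ⊥ → B ≠ ⊥ → C ≠ ⊥ →
    IsFractional (nonZeroDivisors D) A → IsFractional (nonZeroDivisors D) B →
    IsFractional (nonZeroDivisors D) C →
    star (A * B) = star (A * C) → star B = star C

/-- The ∗-dimension of `D`: the supremum of the lengths of chains of quasi-∗-prime ideals
of `D` (between `(0)` and a quasi-∗-prime). -/
noncomputable def starDim (star : Submodule D K → Submodule D K) : ℕ∞ :=
  ⨆ (k : ℕ) (_ : ∃ c : Fin k → Ideal D, StrictMono c ∧ ∀ i, QuasiStarPrime star (c i)),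
    (k : ℕ∞)

/-- A submodule `T` of `K` (containing the image of an integral domain with quotient
field `K`) is integrally closed (in `K`) if every `x ∈ K` satisfying a monic polynomial
equation with coefficients in `T` belongs to `T`. -/
def IntegrallyClosedSub (T : Submodule D K) : Prop :=
  ∀ x : K, (∃ (n : ℕ) (c : Fin n → K), (∀ i, c i ∈ T) ∧
    x ^ n = ∑ i : Fin n, c i * x ^ (i : ℕ)) → x ∈ T

/-- The content ideal `c(p)` of a polynomial: the ideal generated by its coefficients. -/
def contentIdeal (p : Polynomial D) : Ideal D := Ideal.span (Set.range p.coeff)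

/-- The multiplicative set `N(⋆) = { h ∈ D[X] : h ≠ 0, c(h)^⋆ = D^⋆ }` (as a submonoid,
via the closure of this multiplicatively closed set). -/
noncomputable def nagataMonoid (star : Submodule D K → Submodule D K) : Submonoid (Polynomial D) :=
  Submonoid.closure
    {p : Polynomial D | p ≠ 0 ∧ star (idealExt K (contentIdeal p)) = star (1 : Submodule D K)}

/-- The Nagata ring `Na(D,⋆) = D[X]_{N(⋆)}`. -/
abbrev NagataRing (star : Submodule D K → Submodule D K) :=
  Localization (nagataMonoid star)

/-- `V` is a valuation overring of `D` (inside the quotient field `K`): `D ⊆ V ⊆ K` and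
for every nonzero `x ∈ K`, `x ∈ V` or `x⁻¹ ∈ V`. -/
def IsValuationOverring (D : Type*) [CommRing D] {K : Type*} [Field K] [Algebra D K]
    (V : Subring K) : Prop :=
  (∀ d : D, algebraMap D K d ∈ V) ∧ ∀ x : K, x ≠ 0 → (x ∈ V ∨ x⁻¹ ∈ V)

/-- `V` is a ∗-valuation overring of `D`: a valuation overring such that `F^∗ ⊆ FV` for
every nonzero finitely generated `D`-submodule `F` of `K`. -/
def IsStarValuationOverring (star : Submodule D K → Submodule D K) (V : Subring K) : Prop :=
  IsValuationOverring D V ∧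
    ∀ F : Submodule D K, F ≠ ⊥ → F.FG →
      star F ≤ Submodule.span D ((F : Set K) * (V : Set K))

/-- `D` is a Krull domain: there is a family of rank-one discrete valuation overrings of `D`
with quotient field `K` whose intersection is `D`, with finite character. -/
def IsKrullDomain (D : Type*) [CommRing D] (K : Type*) [Field K] [Algebra D K] : Prop :=
  ∃ 𝒱 : Set (Subring K),
    (∀ V ∈ 𝒱, (∀ d : D, algebraMap D K d ∈ V) ∧ IsDVR V ∧
      ∀ x : K, ∃ a ∈ V, ∃ b ∈ V, b ≠ 0 ∧ x * b = a) ∧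
    (⋂ V ∈ 𝒱, (V : Set K)) = Set.range (algebraMap D K) ∧
    ∀ d : D, d ≠ 0 → {V ∈ 𝒱 | ¬ ∃ y ∈ V, algebraMap D K d * y = 1}.Finite

end SemistarDefs

section Helpers

set_option linter.unusedSectionVars false

variable {D : Type*} [CommRing D] [IsDomain D]
variable {K : Type*} [Field K] [Algebra D K] [IsFractionRing D K]

lemma ssm_one_iff {x : K} : x ∈ (1 : Submodule D K) ↔ ∃ d : D, algebraMap D K d = x := by
  rw [Submodule.mem_one]

lemma ssm_idealExt {I : Ideal D} {x : K} :
    x ∈ idealExt K I ↔ ∃ d ∈ I, algebraMap D K d = x := by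
  simp [idealExt, Submodule.mem_map]

lemma ssm_idealExt_mem {I : Ideal D} {d : D} (h : d ∈ I) : algebraMap D K d ∈ idealExt K I :=
  ssm_idealExt.2 ⟨d, h, rfl⟩

lemma ssm_idealExt_ne {I : Ideal D} (h : I ≠ ⊥) : idealExt K I ≠ ⊥ := by
  obtain ⟨d, hd, h0⟩ := Submodule.exists_mem_ne_zero_of_ne_bot h
  intro hb
  have := ssm_idealExt_mem (K := K) hd
  rw [hb, Submodule.mem_bot] at this
  exact h0 ((IsFractionRing.injective D K) (by simpa using this))

lemma ssm_idealExt_mono {I J : Ideal D} (h : I ≤ J) : idealExt K I ≤ idealExt K J :=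
  Submodule.map_mono h

lemma ssm_idealExt_fg {I : Ideal D} (h : I.FG) : (idealExt K I).FG :=
  Submodule.FG.map _ h

lemma ssm_fin_ge (star : Submodule D K → Submodule D K) {F E : Submodule D K} (h0 : F ≠ ⊥)
    (hf : F.FG) (h : F ≤ E) : star F ≤ finTypeOp star E := by
  unfold finTypeOp
  exact le_iSup_of_le F (le_iSup_of_le h0 (le_iSup_of_le hf (le_iSup_of_le h le_rfl)))

lemma ssm_fin_le {star : Submodule D K → Submodule D K} (hs : IsSemistarOperation star)
    {E : Submodule D K} (h0 : E ≠ ⊥) : finTypeOp star E ≤ star E := by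
  unfold finTypeOp
  exact iSup_le fun F => iSup_le fun h => iSup_le fun _ => iSup_le fun hl => hs.mono h h0 hl

lemma ssm_mem_v {E : Submodule D K} {x : K} :
    x ∈ vOp E ↔ ∀ z : K, (∀ e ∈ E, z * e ∈ (1 : Submodule D K)) → x * z ∈ (1 : Submodule D K) := by
  simp [vOp, Submodule.mem_div_iff_forall_mul_mem]

/-! facts about DVR subrings -/

lemma ssm_dvr_total {V : Subring K} (hV : IsDVR V)
    (hfr : ∀ x : K, ∃ a ∈ V, ∃ b ∈ V, b ≠ 0 ∧ x * b = a) (x : K) : x ∈ V ∨ x⁻¹ ∈ V := by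
  obtain ⟨hd, hv⟩ := hV
  obtain ⟨a, ha, b, hb, hb0, hab⟩ := hfr x
  by_cases hx : x = 0
  · left; rw [hx]; exact V.zero_mem
  rcases (ValuationRing.iff_dvd_total.1 (inferInstance : ValuationRing V)).total
    (⟨a, ha⟩ : V) ⟨b, hb⟩ with ⟨⟨c, hc⟩, h⟩ | ⟨⟨c, hc⟩, h⟩
  · right
    have h' : b = a * c := congrArg Subtype.val h
    have : x⁻¹ = c := by
      rw [← hab] at h'
      field_simp
      apply mul_right_cancel₀ hb0
      linear_combination h'
    rw [this]; exact hc
  · left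
    have h' : a = b * c := congrArg Subtype.val h
    have : x = c := by
      apply mul_right_cancel₀ hb0
      linear_combination hab + h'
    rw [this]; exact hc

lemma ssm_dvr_cic {V : Subring K} (hV : IsDVR V)
    (hfr : ∀ x : K, ∃ a ∈ V, ∃ b ∈ V, b ≠ 0 ∧ x * b = a) {z w : K} (hw : w ≠ 0)
    (h : ∀ n : ℕ, z ^ n * w ∈ V) : z ∈ V := by
  by_contra hz
  have hz' := (ssm_dvr_total hV hfr z).resolve_left hz
  have hz0 : z ≠ 0 := by rintro rfl; exact hz V.zero_mem
  obtain ⟨hd, hv⟩ := hV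
  have hwV : w ∈ V := by simpa using h 0
  have hnu : ¬ IsUnit (⟨z⁻¹, hz'⟩ : V) := by
    intro hu
    obtain ⟨⟨c, hc⟩, hcc⟩ := hu.exists_right_inv
    have h' : z⁻¹ * c = 1 := congrArg Subtype.val hcc
    have : z = c := by field_simp at h'; exact h'.symm
    exact hz (this ▸ hc)
  have hfm := FiniteMultiplicity.of_not_isUnit hnu
    (b := (⟨w, hwV⟩ : V)) (by intro h; exact hw (congrArg Subtype.val h))
  obtain ⟨n, hn⟩ := hfm
  apply hn
  refine ⟨⟨z ^ (n+1) * w, h _⟩, ?_⟩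
  apply Subtype.ext
  change w = (z⁻¹) ^ (n+1) * (z ^ (n+1) * w)
  rw [← mul_assoc, ← mul_pow, inv_mul_cancel₀ hz0]; simp

/-- an ideal has an element generating its extension to a DVR overring -/
lemma ssm_dvr_min {V : Subring K} (hDV : ∀ d : D, algebraMap D K d ∈ V) (hV : IsDVR V)
    (I : Ideal D) : ∃ y ∈ I, ∀ x ∈ I, ∃ c ∈ V, algebraMap D K x = algebraMap D K y * c := by
  obtain ⟨hd, hv⟩ := hV
  let f : D → V := fun d => ⟨algebraMap D K d, hDV d⟩
  obtain ⟨A, ⟨y, hy, rfl⟩, hmax⟩ := set_has_maximal_iff_noetherian.2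
    (inferInstance : IsNoetherian V V) {A | ∃ y ∈ I, A = Ideal.span {f y}}
    ⟨_, 0, I.zero_mem, rfl⟩
  refine ⟨y, hy, fun x hx => ?_⟩
  have key : f y ∣ f x := by
    rcases (ValuationRing.iff_dvd_total.1 (inferInstance : ValuationRing V)).total
      (f y) (f x) with h | h
    · exact h
    · have h1 : Ideal.span {f y} ≤ Ideal.span {f x} := Ideal.span_singleton_le_span_singleton.2 h
      have h2 := hmax _ ⟨x, hx, rfl⟩
      have h3 : Ideal.span {f x} ≤ Ideal.span {f y} := by
        by_contra hh
        exact h2 (lt_of_le_not_ge h1 hh)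
      exact Ideal.span_singleton_le_span_singleton.1 h3
  obtain ⟨⟨c, hc⟩, h⟩ := key
  exact ⟨c, hc, congrArg Subtype.val h⟩

lemma ssm_krull_mori (hK : IsKrullDomain D K) {I : Ideal D} (hI : I ≠ ⊥) :
    ∃ J : Ideal D, J ≤ I ∧ J ≠ ⊥ ∧ J.FG ∧ ∀ z : K,
      (∀ e ∈ J, z * algebraMap D K e ∈ (1 : Submodule D K)) →
      (∀ e ∈ I, z * algebraMap D K e ∈ (1 : Submodule D K)) := by
  obtain ⟨𝒱, h1, h2, h3⟩ := hK
  obtain ⟨x, hx, hx0⟩ := Submodule.exists_mem_ne_zero_of_ne_bot hI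
  have hch : ∀ V : Subring K, ∃ y ∈ I, V ∈ 𝒱 →
      ∀ x ∈ I, ∃ c ∈ V, algebraMap D K x = algebraMap D K y * c := by
    intro V
    by_cases hV : V ∈ 𝒱
    · obtain ⟨y, hy, h⟩ := ssm_dvr_min (h1 V hV).1 (h1 V hV).2.1 I
      exact ⟨y, hy, fun _ => h⟩
    · exact ⟨0, I.zero_mem, fun h => absurd h hV⟩
  choose g hgI hg using hch
  have hfin := h3 x hx0
  set S := {V ∈ 𝒱 | ¬ ∃ y ∈ V, algebraMap D K x * y = 1}
  refine ⟨Ideal.span (insert x (g '' S)), ?_, ?_, ?_, ?_⟩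
  · rw [Ideal.span_le]
    rintro y (rfl | ⟨V, -, rfl⟩)
    · exact hx
    · exact hgI V
  · intro hb
    have : x ∈ Ideal.span (insert x (g '' S)) := Ideal.subset_span (Set.mem_insert _ _)
    rw [hb] at this
    exact hx0 this
  · exact Submodule.fg_span ((hfin.image g).insert x)
  · intro z hz e he
    have hmem : z * algebraMap D K e ∈ ⋂ V ∈ 𝒱, (V : Set K) := by
      simp only [Set.mem_iInter]
      intro V hV
      have hone : ∀ w : K, w ∈ (1 : Submodule D K) → w ∈ V := by
        intro w hw
        obtain ⟨d, rfl⟩ := ssm_one_iff.1 hw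
        exact (h1 V hV).1 d
      by_cases hVS : V ∈ S
      · obtain ⟨c, hc, hce⟩ := hg V hV e he
        rw [hce, ← mul_assoc]
        exact V.mul_mem (hone _ (hz _ (Ideal.subset_span (Set.mem_insert_of_mem _ ⟨V, hVS, rfl⟩)))) hc
      · have : ∃ y ∈ V, algebraMap D K x * y = 1 := by
          by_contra hcon
          exact hVS ⟨hV, hcon⟩
        obtain ⟨y, hy, hxy⟩ := this
        have hzx := hone _ (hz x (Ideal.subset_span (Set.mem_insert _ _)))
        have : z * algebraMap D K e = (z * algebraMap D K x) * y * algebraMap D K e := by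
          linear_combination -z * algebraMap D K e * hxy
        rw [this]
        exact V.mul_mem (V.mul_mem hzx hy) ((h1 V hV).1 e)
    rw [h2] at hmem
    exact ssm_one_iff.2 hmem

lemma ssm_krull_mori_v (hK : IsKrullDomain D K) {I : Ideal D} (hI : I ≠ ⊥) :
    ∃ J : Ideal D, J ≤ I ∧ J ≠ ⊥ ∧ J.FG ∧ idealExt K I ≤ vOp (idealExt K J) ∧ 
      vOp (idealExt K I) ≤ vOp (idealExt K J) := by
  obtain ⟨J, h1, h2, h3, h4⟩ := ssm_krull_mori hK hI
  refine ⟨J, h1, h2, h3, ?_, ?_⟩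
  · intro x hx
    obtain ⟨d, hd, rfl⟩ := ssm_idealExt.1 hx
    rw [ssm_mem_v]
    intro z hz
    rw [mul_comm]
    exact h4 z (fun e he => hz _ (ssm_idealExt_mem he)) d hd
  · intro x hx
    rw [ssm_mem_v] at hx ⊢
    intro z hz
    refine hx z fun e he => ?_
    obtain ⟨d, hd, rfl⟩ := ssm_idealExt.1 he
    exact h4 z (fun e he => hz _ (ssm_idealExt_mem he)) d hd

/-- complete integral closure of Krull domains -/
lemma ssm_krull_cic (hK : IsKrullDomain D K) {z w : K} (hw : w ≠ 0)
    (h : ∀ n : ℕ, z ^ n * w ∈ (1 : Submodule D K)) : z ∈ (1 : Submodule D K) := by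
  obtain ⟨𝒱, h1, h2, h3⟩ := hK
  have : z ∈ ⋂ V ∈ 𝒱, (V : Set K) := by
    simp only [Set.mem_iInter]
    intro V hV
    refine ssm_dvr_cic (h1 V hV).2.1 (h1 V hV).2.2 hw fun n => ?_
    obtain ⟨d, hd⟩ := ssm_one_iff.1 (h n)
    rw [← hd]
    exact (h1 V hV).1 d
  rw [h2] at this
  exact ssm_one_iff.2 this

/-- valuation ring criterion for the localization at a prime -/
lemma ssm_val_iff (M : Ideal D) [M.IsPrime] :
    IsValuationDomain (Localization.AtPrime M) ↔
      ∀ x y : D, ∃ s, s ∉ M ∧ (x ∣ s * y ∨ y ∣ s * x) := by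
  have hinj : Function.Injective (algebraMap D (Localization.AtPrime M)) :=
    IsLocalization.injective _ M.primeCompl_le_nonZeroDivisors
  constructor
  · rintro ⟨hd, hv⟩ x y
    have key : ∀ x y : D, algebraMap D (Localization.AtPrime M) x ∣ algebraMap D _ y →
        ∃ s, s ∉ M ∧ x ∣ s * y := by
      rintro x y ⟨c, hc⟩
      obtain ⟨⟨r, s⟩, hrs⟩ := IsLocalization.surj M.primeCompl c
      refine ⟨s, s.2, r, hinj ?_⟩
      simp only [map_mul] at hrs ⊢
      rw [hc, ← hrs]; ring
    rcases (ValuationRing.iff_dvd_total.1 hv).total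
      (algebraMap D (Localization.AtPrime M) x) (algebraMap D _ y) with h | h
    · obtain ⟨s, hs, h⟩ := key _ _ h
      exact ⟨s, hs, Or.inl h⟩
    · obtain ⟨s, hs, h⟩ := key _ _ h
      exact ⟨s, hs, Or.inr h⟩
  · intro h
    have hd : IsDomain (Localization.AtPrime M) :=
      IsLocalization.isDomain_localization M.primeCompl_le_nonZeroDivisors
    refine ⟨hd, ValuationRing.iff_dvd_total.2 ⟨fun a b => ?_⟩⟩
    have hu : ∀ s, s ∉ M → IsUnit (algebraMap D (Localization.AtPrime M) s) := fun s hs =>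
      IsLocalization.map_units _ (⟨s, hs⟩ : M.primeCompl)
    obtain ⟨⟨x, s⟩, hx⟩ := IsLocalization.surj M.primeCompl a
    obtain ⟨⟨y, t⟩, hy⟩ := IsLocalization.surj M.primeCompl b
    have hs := hu s s.2
    have ht := hu t t.2
    dsimp only at hx hy
    obtain ⟨r, hr, h⟩ := h x y
    have hr := hu r hr
    rcases h with h | h
    · left
      have := map_dvd (algebraMap D (Localization.AtPrime M)) h
      rwa [map_mul, hr.dvd_mul_left, ← hx, ← hy, hs.mul_right_dvd, ht.dvd_mul_right] at this
    · right
      have := map_dvd (algebraMap D (Localization.AtPrime M)) h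
      rwa [map_mul, hr.dvd_mul_left, ← hx, ← hy, ht.mul_right_dvd, hs.dvd_mul_right] at this

lemma ssm_backward {star : Submodule D K → Submodule D K} (hs : IsSemistarOperation star)
    (hK : IsKrullDomain D K)
    (ht : ∀ E : Submodule D K, E ≠ ⊥ → finTypeOp star E = finTypeOp (vOp (D := D) (K := K)) E) :
    StarDedekind star := by
  constructor
  · intro c hc
    have hne : (⨆ n, c n) ≠ ⊥ := fun h => (hc 0).1 (by
      rw [eq_bot_iff, ← h]; exact le_iSup (fun n => c n) 0)
    obtain ⟨J, hJ, hJ0, hJf, hv, -⟩ := ssm_krull_mori_v hK hne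
    have : ∃ n, J ≤ c n := by
      obtain ⟨S, rfl⟩ := hJf
      have hdir : Directed (· ≤ ·) (fun n => c n) := c.monotone.directed_le
      have hmem : ∀ x ∈ S, ∃ n, x ∈ c n := fun x hx =>
        (Submodule.mem_iSup_of_directed _ hdir).1 (hJ (Submodule.subset_span hx))
      choose! g hg using hmem
      refine ⟨S.sup g, Submodule.span_le.2 fun x hx => ?_⟩
      exact c.monotone (Finset.le_sup (f := g) hx) (hg x hx)
    obtain ⟨n, hn⟩ := this
    refine ⟨n, fun m hm => le_antisymm ?_ (c.monotone hm)⟩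
    intro x hx
    have h0 := ssm_idealExt_ne (K := K) (hc n).1
    have h1 : algebraMap D K x ∈ vOp (idealExt K J) :=
      hv (ssm_idealExt_mem ((le_iSup (fun n => c n) m) hx))
    have h2 := ssm_fin_ge vOp (ssm_idealExt_ne hJ0) (ssm_idealExt_fg hJf)
      (ssm_idealExt_mono (K := K) hn) h1
    rw [← ht _ h0] at h2
    have h3 := ssm_fin_le hs h0 h2
    rw [← (hc n).2]
    exact h3
  · intro M hMp hM
    rw [ssm_val_iff]
    intro x y
    by_cases hx : x = 0
    · exact ⟨1, fun h => hMp.ne_top ((Ideal.eq_top_iff_one M).2 h), Or.inr (by simp [hx])⟩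
    by_contra! hcon
    have hx' : algebraMap D K x ≠ 0 := by
      simpa using hx
    -- the colon elements
    have hzM : ∀ z : K, ∀ a b : D, algebraMap D K a = z * algebraMap D K x →
        algebraMap D K b = z * algebraMap D K y → a ∈ M ∧ b ∈ M := by
      intro z a b ha hb
      have hab : a * y = b * x := by
        apply IsFractionRing.injective D K
        simp only [map_mul, ha, hb]; ring
      constructor
      · by_contra h
        exact (hcon a h).1 ⟨b, by rw [hab, mul_comm]⟩
      · by_contra h
        exact (hcon b h).2 ⟨a, by rw [← hab, mul_comm]⟩
    let I : Ideal D := Ideal.span {d | ∃ z : K, algebraMap D K d = z * algebraMap D K x ∧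
      z * algebraMap D K y ∈ (1 : Submodule D K) ∨ algebraMap D K d = z * algebraMap D K y ∧
      z * algebraMap D K x ∈ (1 : Submodule D K)}
    have hIM : I ≤ M := by
      refine Ideal.span_le.2 ?_
      rintro d ⟨z, ⟨h1, h2⟩ | ⟨h1, h2⟩⟩
      · obtain ⟨b, hb⟩ := ssm_one_iff.1 h2
        exact (hzM z d b h1 hb).1
      · obtain ⟨b, hb⟩ := ssm_one_iff.1 h2
        exact (hzM z b d hb h1).2
    have hxI : x ∈ I := Ideal.subset_span ⟨1, Or.inl ⟨by simp, ssm_one_iff.2 ⟨y, by simp⟩⟩⟩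
    have hI0 : I ≠ ⊥ := fun h => hx (by rw [h] at hxI; exact hxI)
    obtain ⟨J, hJ, hJ0, hJf, -, hv⟩ := ssm_krull_mori_v (K := K) hK hI0
    have h1 : (1 : K) ∈ vOp (idealExt K I) := by
      rw [ssm_mem_v]
      intro z hz
      rw [one_mul]
      have hz1 : ∀ w : K, w * algebraMap D K x ∈ (1 : Submodule D K) →
          w * algebraMap D K y ∈ (1 : Submodule D K) →
          z * w * algebraMap D K x ∈ (1 : Submodule D K) ∧
          z * w * algebraMap D K y ∈ (1 : Submodule D K) := by
        intro w hwx hwy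
        obtain ⟨a, ha⟩ := ssm_one_iff.1 hwx
        obtain ⟨b, hb⟩ := ssm_one_iff.1 hwy
        constructor
        · rw [mul_assoc, ← ha]
          exact hz _ (ssm_idealExt_mem (Ideal.subset_span ⟨w, Or.inl ⟨ha, hwy⟩⟩))
        · rw [mul_assoc, ← hb]
          exact hz _ (ssm_idealExt_mem (Ideal.subset_span ⟨w, Or.inr ⟨hb, hwx⟩⟩))
      have hz2 : ∀ n : ℕ, z ^ n * algebraMap D K x ∈ (1 : Submodule D K) ∧
          z ^ n * algebraMap D K y ∈ (1 : Submodule D K) := by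
        intro n
        induction n with
        | zero => exact ⟨ssm_one_iff.2 ⟨x, by simp⟩, ssm_one_iff.2 ⟨y, by simp⟩⟩
        | succ n ih => 
          rw [pow_succ']
          exact hz1 _ ih.1 ih.2
      exact ssm_krull_cic hK hx' fun n => (hz2 n).1
    have h2 := ssm_fin_ge vOp (ssm_idealExt_ne hJ0) (ssm_idealExt_fg hJf)
      (ssm_idealExt_mono (K := K) (hJ.trans hIM)) (hv h1)
    rw [← ht _ (ssm_idealExt_ne hM.1.1)] at h2
    apply hMp.ne_top
    rw [Ideal.eq_top_iff_one, ← hM.1.2]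
    simpa using h2

/-! forward direction -/

lemma ssm_S1 {star : Submodule D K → Submodule D K} (hs : IsSemistarOperation star)
    {E F : Submodule D K} (hE : E ≠ ⊥) (hF : F ≠ ⊥) (x : K)
    (h : ∀ e ∈ E, x * e ∈ F) : ∀ e ∈ star E, x * e ∈ star F := by
  intro e he
  by_cases hx : x = 0
  · rw [hx, zero_mul]; exact Submodule.zero_mem _
  have hne : Submodule.map (LinearMap.mulLeft D x) E ≠ ⊥ := by
    obtain ⟨a, ha, h0⟩ := Submodule.exists_mem_ne_zero_of_ne_bot hE
    intro hb
    have : x * a ∈ Submodule.map (LinearMap.mulLeft D x) E := ⟨a, ha, rfl⟩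
    rw [hb, Submodule.mem_bot] at this
    exact (mul_ne_zero hx h0) this
  have hle : Submodule.map (LinearMap.mulLeft D x) E ≤ F := by
    rintro _ ⟨a, ha, rfl⟩
    exact h a ha
  have := hs.mono hne hF hle
  rw [hs.map_smul x hx hE] at this
  exact this ⟨e, he, rfl⟩

lemma ssm_span_ne {a : K} (ha : a ≠ 0) : Submodule.span D {a} ≠ ⊥ := by
  simpa using ha

lemma ssm_S4 {star : Submodule D K → Submodule D K} (hs : IsSemistarOperation star)
    (hsemi : star (1 : Submodule D K) = 1) {a : K} (ha : a ≠ 0) :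
    star (Submodule.span D {a}) = Submodule.span D {a} := by
  have h1 : (1 : Submodule D K) ≠ ⊥ := by
    intro h
    have : (1 : K) ∈ (1 : Submodule D K) := ssm_one_iff.2 ⟨1, by simp⟩
    rw [h, Submodule.mem_bot] at this
    exact one_ne_zero this
  have : Submodule.span D {a} = Submodule.map (LinearMap.mulLeft D a) (1 : Submodule D K) := by
    rw [Submodule.one_eq_span, Submodule.map_span]; simp
  rw [this, hs.map_smul a ha h1, hsemi]

/-- the closure of an ideal -/
def ssmCl (star : Submodule D K → Submodule D K) (I : Ideal D) : Ideal D :=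
  Submodule.comap (Algebra.linearMap D K) (star (idealExt K I))

lemma ssm_mem_cl {star : Submodule D K → Submodule D K} {I : Ideal D} {d : D} :
    d ∈ ssmCl star I ↔ algebraMap D K d ∈ star (idealExt K I) := Iff.rfl

lemma ssm_le_cl {star : Submodule D K → Submodule D K} (hs : IsSemistarOperation star)
    {I : Ideal D} (hI : I ≠ ⊥) : I ≤ ssmCl star I := fun _ hd =>
  hs.le_star (ssm_idealExt_ne hI) (ssm_idealExt_mem hd)

lemma ssm_cl_min {star : Submodule D K → Submodule D K} (hs : IsSemistarOperation star)
    {I J : Ideal D} (hI : I ≠ ⊥) (hJ : QuasiStarIdeal star J) (h : I ≤ J) : ssmCl star I ≤ J := by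
  intro d hd
  rw [← hJ.2]
  exact hs.mono (ssm_idealExt_ne hI) (ssm_idealExt_ne hJ.1) (ssm_idealExt_mono h) hd

lemma ssm_cl_quasi {star : Submodule D K → Submodule D K} (hs : IsSemistarOperation star)
    {I : Ideal D} (hI : I ≠ ⊥) : QuasiStarIdeal star (ssmCl star I) := by
  have h0 : ssmCl star I ≠ ⊥ := fun h => hI (by
    rw [eq_bot_iff, ← h]; exact ssm_le_cl hs hI)
  refine ⟨h0, le_antisymm ?_ (ssm_le_cl hs h0)⟩
  intro d hd
  rw [ssm_mem_cl, ← hs.star_star (ssm_idealExt_ne hI)]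
  refine hs.mono (ssm_idealExt_ne h0) (hs.ne_bot (ssm_idealExt_ne hI)) ?_ hd
  intro x hx
  obtain ⟨d, hd, rfl⟩ := ssm_idealExt.1 hx
  exact hd

lemma ssm_wf {star : Submodule D K → Submodule D K} (hN : StarNoetherian star) :
    WellFoundedGT {I : Ideal D // QuasiStarIdeal star I} := by
  rw [wellFoundedGT_iff_monotone_chain_condition]
  intro a
  obtain ⟨n, hn⟩ := hN ⟨fun n => (a n).1, fun i j h => a.monotone h⟩ (fun n => (a n).2)
  exact ⟨n, fun m hm => Subtype.ext (hn m hm).symm⟩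

lemma ssm_max_of_set {star : Submodule D K → Submodule D K} (hN : StarNoetherian star)
    (S : Set (Ideal D)) (hS : ∀ I ∈ S, QuasiStarIdeal star I) (hne : S.Nonempty) :
    ∃ I ∈ S, ∀ J ∈ S, I ≤ J → J = I := by
  have := ssm_wf hN
  obtain ⟨I0, hI0⟩ := hne
  obtain ⟨I, hI, hmax⟩ := (this.wf).has_min {I | I.1 ∈ S} ⟨⟨I0, hS _ hI0⟩, hI0⟩
  refine ⟨I.1, hI, fun J hJ hle => ?_⟩
  have h2 : ¬ I.1 < J := fun hlt => hmax ⟨J, hS J hJ⟩ hJ hlt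
  exact (eq_of_le_of_not_lt hle h2).symm

lemma ssm_exists_max {star : Submodule D K → Submodule D K} (hN : StarNoetherian star)
    {I : Ideal D} (hI : QuasiStarIdeal star I) (h : I ≠ ⊤) :
    ∃ M, QuasiStarMaximal star M ∧ I ≤ M := by
  obtain ⟨M, ⟨h1, h2, h3⟩, h4⟩ := ssm_max_of_set hN
    {M | QuasiStarIdeal star M ∧ M ≠ ⊤ ∧ I ≤ M} (fun _ h => h.1) ⟨I, hI, h, le_rfl⟩
  exact ⟨M, ⟨h1, h2, fun J hJ hJt hle => h4 J ⟨hJ, hJt, h3.trans hle⟩ hle⟩, h3⟩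

/-- every ideal is a finitely generated one up to star -/
lemma ssm_fg {star : Submodule D K → Submodule D K} (hs : IsSemistarOperation star)
    (hN : StarNoetherian star) {I : Ideal D} (hI : I ≠ ⊥) :
    ∃ J : Ideal D, J ≤ I ∧ J ≠ ⊥ ∧ J.FG ∧ I ≤ ssmCl star J := by
  obtain ⟨x, hx, hx0⟩ := Submodule.exists_mem_ne_zero_of_ne_bot hI
  obtain ⟨A, ⟨J, h1, h2, h3, rfl⟩, h4⟩ := ssm_max_of_set hN
    {A | ∃ J : Ideal D, J ≤ I ∧ J ≠ ⊥ ∧ J.FG ∧ A = ssmCl star J}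
    (by rintro _ ⟨J, -, hJ, -, rfl⟩; exact ssm_cl_quasi hs hJ)
    ⟨_, Ideal.span {x}, by simpa [Ideal.span_le] using hx, by simpa using hx0,
      ⟨{x}, by simp⟩, rfl⟩
  refine ⟨J, h1, h2, h3, fun y hy => ?_⟩
  have hne : J ⊔ Ideal.span {y} ≠ ⊥ := fun h => h2 (by rw [eq_bot_iff, ← h]; exact le_sup_left)
  have := h4 (ssmCl star (J ⊔ Ideal.span {y}))
    ⟨_, sup_le h1 (by simpa [Ideal.span_le] using hy), hne,
      Submodule.FG.sup h3 ⟨{y}, by simp⟩, rfl⟩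
    (ssm_cl_min hs h2 (ssm_cl_quasi hs hne) (le_sup_left.trans (ssm_le_cl hs hne)))
  rw [← this]
  exact ssm_le_cl hs hne ((le_sup_right : _ ≤ J ⊔ Ideal.span {y}) (Ideal.mem_span_singleton_self y))

lemma ssm_fin_eq {star : Submodule D K → Submodule D K} (hs : IsSemistarOperation star)
    (hN : StarNoetherian star) {I : Ideal D} (hI : I ≠ ⊥) :
    finTypeOp star (idealExt K I) = star (idealExt K I) := by
  refine le_antisymm (ssm_fin_le hs (ssm_idealExt_ne hI)) ?_
  obtain ⟨J, h1, h2, h3, h4⟩ := ssm_fg hs hN hI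
  have hJ := ssm_idealExt_ne (K := K) h2
  refine le_trans ?_ (ssm_fin_ge star hJ (ssm_idealExt_fg h3)
    (ssm_idealExt_mono h1))
  rw [← hs.star_star hJ]
  refine hs.mono (ssm_idealExt_ne hI) (hs.ne_bot hJ) ?_
  intro x hx
  obtain ⟨d, hd, rfl⟩ := ssm_idealExt.1 hx
  exact h4 hd

lemma ssm_quasi_iff {star : Submodule D K → Submodule D K} (hs : IsSemistarOperation star)
    (hN : StarNoetherian star) (I : Ideal D) :
    QuasiStarIdeal (finTypeOp star) I ↔ QuasiStarIdeal star I := by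
  unfold QuasiStarIdeal
  refine and_congr_right fun h => ?_
  rw [ssm_fin_eq hs hN h]

lemma ssm_max_iff {star : Submodule D K → Submodule D K} (hs : IsSemistarOperation star)
    (hN : StarNoetherian star) (I : Ideal D) :
    QuasiStarMaximal (finTypeOp star) I ↔ QuasiStarMaximal star I := by
  unfold QuasiStarMaximal
  simp only [ssm_quasi_iff hs hN]

lemma ssm_sup_ne {I : Ideal D} (hI : I ≠ ⊥) (a : D) : I ⊔ Ideal.span {a} ≠ ⊥ :=
  fun h => hI (by rw [eq_bot_iff, ← h]; exact le_sup_left)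

lemma ssm_mem_sup (I : Ideal D) (a : D) : a ∈ I ⊔ Ideal.span {a} :=
  (le_sup_right : _ ≤ I ⊔ Ideal.span {a}) (Ideal.mem_span_singleton_self a)

lemma ssm_prime {star : Submodule D K → Submodule D K} (hs : IsSemistarOperation star)
    {M : Ideal D} (hM : QuasiStarMaximal star M) : M.IsPrime := by
  refine ⟨hM.2.1, fun {a b} hab => ?_⟩
  by_contra! hcon
  obtain ⟨ha, hb⟩ := hcon
  have hne := ssm_sup_ne hM.1.1 a
  have htop : ssmCl star (M ⊔ Ideal.span {a}) = ⊤ := by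
    by_contra h
    have := hM.2.2 _ (ssm_cl_quasi hs hne) h (le_sup_left.trans (ssm_le_cl hs hne))
    exact ha (this ▸ ssm_le_cl hs hne (ssm_mem_sup M a))
  have h1 : (1 : D) ∈ ssmCl star (M ⊔ Ideal.span {a}) := htop ▸ Submodule.mem_top
  have := ssm_S1 hs (ssm_idealExt_ne hne) (ssm_idealExt_ne (K := K) hM.1.1) (algebraMap D K b) (by
    intro e he
    obtain ⟨d, hd, rfl⟩ := ssm_idealExt.1 he
    rw [← map_mul]
    apply ssm_idealExt_mem
    obtain ⟨m, hm, c, hc, rfl⟩ := Submodule.mem_sup.1 hd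
    obtain ⟨r, rfl⟩ := Ideal.mem_span_singleton'.1 hc
    have : b * (m + r * a) = b * m + r * (a * b) := by ring
    rw [this]
    exact M.add_mem (M.mul_mem_left _ hm) (M.mul_mem_left _ hab)) _ h1
  rw [Algebra.linearMap_apply, ← map_mul, mul_one] at this
  apply hb
  rw [← hM.1.2]
  exact this

/-- finitely generated submodules are locally principal -/
lemma ssm_local {M : Ideal D} [hMp : M.IsPrime] (hv : IsValuationDomain (Localization.AtPrime M))
    {F : Submodule D K} (hF : F.FG) :
    ∃ a ∈ F, ∃ s, s ∉ M ∧ ∀ f ∈ F, algebraMap D K s * f ∈ Submodule.span D {a} := by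
  classical
  rw [ssm_val_iff] at hv
  have hv' : ∀ x y : K, ∃ s, s ∉ M ∧ (algebraMap D K s * x ∈ Submodule.span D {y} ∨
      algebraMap D K s * y ∈ Submodule.span D {x}) := by
    intro x y
    obtain ⟨⟨d, hd⟩, hdd⟩ := IsLocalization.exist_integer_multiples_of_finset (nonZeroDivisors D)
      ({x, y} : Finset K)
    obtain ⟨x', hx'⟩ := hdd x (by simp)
    obtain ⟨y', hy'⟩ := hdd y (by simp)
    simp only [Algebra.smul_def] at hx' hy'
    have hd0 : algebraMap D K d ≠ 0 := by
      simpa using nonZeroDivisors.ne_zero hd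
    obtain ⟨s, hs, h⟩ := hv x' y'
    refine ⟨s, hs, ?_⟩
    simp only [Submodule.mem_span_singleton, Algebra.smul_def]
    rcases h with ⟨c, hc⟩ | ⟨c, hc⟩
    · right
      refine ⟨c, mul_left_cancel₀ hd0 ?_⟩
      have := congrArg (algebraMap D K) hc
      simp only [map_mul] at this
      rw [hx', hy'] at this
      linear_combination -this
    · left
      refine ⟨c, mul_left_cancel₀ hd0 ?_⟩
      have := congrArg (algebraMap D K) hc
      simp only [map_mul] at this
      rw [hx', hy'] at this
      linear_combination -this
  induction F, hF using Submodule.fg_induction with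
  | singleton x =>
    refine ⟨x, Submodule.mem_span_singleton_self x, 1, fun h => hMp.ne_top ((Ideal.eq_top_iff_one M).2 h), ?_⟩
    intro f hf
    simpa using hf
  | sup F G _ _ hF hG =>
    obtain ⟨a, ha, s, hs, h1⟩ := hF
    obtain ⟨b, hb, t, ht, h2⟩ := hG
    obtain ⟨u, hu, h⟩ := hv' a b
    have hsm : ∀ (N : Submodule D K) (d : D) (x : K), x ∈ N → algebraMap D K d * x ∈ N := by
      intro N d x hx
      rw [← Algebra.smul_def]; exact N.smul_mem d hx
    have hstu : s * t * u ∉ M := fun h => by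
      rcases hMp.mem_or_mem h with h | h
      · rcases hMp.mem_or_mem h with h | h
        · exact hs h
        · exact ht h
      · exact hu h
    have htr : ∀ a b : K, algebraMap D K u * a ∈ Submodule.span D {b} → ∀ x ∈ Submodule.span D {a},
        algebraMap D K u * x ∈ Submodule.span D {b} := by
      intro a b h x hx
      obtain ⟨c, rfl⟩ := Submodule.mem_span_singleton.1 hx
      rw [mul_smul_comm]
      exact Submodule.smul_mem _ _ h
    rcases h with h | h
    · refine ⟨b, (le_sup_right : G ≤ F ⊔ G) hb, s * t * u, hstu, fun f hf => ?_⟩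
      obtain ⟨x, hx, y, hy, rfl⟩ := Submodule.mem_sup.1 hf
      have e : algebraMap D K (s * t * u) * (x + y) =
        algebraMap D K t * (algebraMap D K u * (algebraMap D K s * x)) +
        algebraMap D K (s * u) * (algebraMap D K t * y) := by
        simp only [map_mul]; ring
      rw [e]
      exact Submodule.add_mem _ (hsm _ _ _ (htr _ _ h _ (h1 x hx))) (hsm _ _ _ (h2 y hy))
    · refine ⟨a, (le_sup_left : F ≤ F ⊔ G) ha, s * t * u, hstu, fun f hf => ?_⟩
      obtain ⟨x, hx, y, hy, rfl⟩ := Submodule.mem_sup.1 hf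
      have e : algebraMap D K (s * t * u) * (x + y) =
        algebraMap D K (t * u) * (algebraMap D K s * x) +
        algebraMap D K s * (algebraMap D K u * (algebraMap D K t * y)) := by
        simp only [map_mul]; ring
      rw [e]
      exact Submodule.add_mem _ (hsm _ _ _ (h1 x hx)) (hsm _ _ _ (htr _ _ h _ (h2 y hy)))

/-- nonzero ideals are locally principal -/
lemma ssm_local_ideal {star : Submodule D K → Submodule D K} (hs : IsSemistarOperation star)
    (hsemi : star (1 : Submodule D K) = 1) (hN : StarNoetherian star)
    {M : Ideal D} [hMp : M.IsPrime] (hv : IsValuationDomain (Localization.AtPrime M))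
    (I : Ideal D) : ∃ a ∈ I, ∃ s, s ∉ M ∧ ∀ x ∈ I, a ∣ s * x := by
  by_cases hI : I = ⊥
  · refine ⟨0, I.zero_mem, 1, fun h => hMp.ne_top ((Ideal.eq_top_iff_one M).2 h), ?_⟩
    intro x hx
    rw [hI] at hx
    have : x = 0 := hx
    simp [this]
  obtain ⟨J, h1, h2, h3, h4⟩ := ssm_fg hs hN hI
  have hJ := ssm_idealExt_ne (K := K) h2
  obtain ⟨a', ha', s, hsM, h⟩ := ssm_local (K := K) hv (ssm_idealExt_fg h3)
  obtain ⟨a, ha, rfl⟩ := ssm_idealExt.1 ha'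
  have ha0 : algebraMap D K a ≠ 0 := by
    intro h0
    obtain ⟨x, hx, hx0⟩ := Submodule.exists_mem_ne_zero_of_ne_bot h2
    have := h _ (ssm_idealExt_mem hx)
    rw [h0] at this
    simp only [Submodule.span_zero_singleton, Submodule.mem_bot, mul_eq_zero,
      FaithfulSMul.algebraMap_eq_zero_iff] at this
    rcases this with h | h
    · exact hsM (h ▸ M.zero_mem)
    · exact hx0 h
  refine ⟨a, h1 ha, s, hsM, fun x hx => ?_⟩
  have := ssm_S1 hs hJ (ssm_span_ne ha0) _ h _ (h4 hx)
  rw [ssm_S4 hs hsemi ha0] at this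
  obtain ⟨c, hc⟩ := Submodule.mem_span_singleton.1 this
  rw [Algebra.smul_def] at hc
  refine ⟨c, IsFractionRing.injective D K ?_⟩
  simp only [map_mul]
  rw [Algebra.linearMap_apply] at hc
  rw [← hc, mul_comm]

lemma ssm_colon {star : Submodule D K → Submodule D K} (hs : IsSemistarOperation star)
    (hN : StarNoetherian star) {G : Submodule D K} (hG : G ≠ ⊥) (hGs : star G = G) {x : K}
    (hx : x ∉ G) : ∃ M, QuasiStarMaximal star M ∧ ∀ d : D, algebraMap D K d * x ∈ G → d ∈ M := by
  let I : Ideal D := Submodule.comap (LinearMap.toSpanSingleton D K x) G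
  have hmem : ∀ d : D, d ∈ I ↔ algebraMap D K d * x ∈ G := by
    intro d
    rw [← Algebra.smul_def]; rfl
  have hI0 : I ≠ ⊥ := by
    obtain ⟨g, hg, hg0⟩ := Submodule.exists_mem_ne_zero_of_ne_bot hG
    have hx0 : x ≠ 0 := by rintro rfl; exact hx G.zero_mem
    obtain ⟨a, b, hb, hab⟩ := IsFractionRing.div_surjective (A := D) (g / x)
    have hb0 : algebraMap D K b ≠ 0 := by simpa using nonZeroDivisors.ne_zero hb
    have ha0 : a ≠ 0 := by
      rintro rfl
      rw [map_zero, zero_div] at hab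
      exact (div_ne_zero hg0 hx0) hab.symm
    intro h
    apply ha0
    have : a ∈ I := by
      rw [hmem]
      have : algebraMap D K a * x = b • g := by
        rw [Algebra.smul_def]
        field_simp at hab
        exact hab
      rw [this]
      exact G.smul_mem _ hg
    rw [h] at this
    exact this
  have hq : QuasiStarIdeal star I := by
    refine ⟨hI0, le_antisymm ?_ (ssm_le_cl hs hI0)⟩
    intro d hd
    rw [hmem, mul_comm]
    have := ssm_S1 hs (ssm_idealExt_ne hI0) hG x (by
      intro e he
      obtain ⟨d, hd, rfl⟩ := ssm_idealExt.1 he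
      rw [mul_comm]
      exact (hmem d).1 hd) _ hd
    rw [hGs] at this
    exact this
  have ht : I ≠ ⊤ := by
    intro h
    have : (1 : D) ∈ I := h ▸ Submodule.mem_top
    rw [hmem, map_one, one_mul] at this
    exact hx this
  obtain ⟨M, hM, hle⟩ := ssm_exists_max hN hq ht
  exact ⟨M, hM, fun d hd => hle ((hmem d).2 hd)⟩

lemma ssm_star_eq_v {star : Submodule D K → Submodule D K} (hs : IsSemistarOperation star)
    (hsemi : star (1 : Submodule D K) = 1) (hN : StarNoetherian star)
    (hP : ∀ (M : Ideal D) [M.IsPrime], QuasiStarMaximal star M →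
      IsValuationDomain (Localization.AtPrime M)) {F : Submodule D K} (h0 : F ≠ ⊥) (hF : F.FG) :
    star F = vOp F := by
  have h1 : (1 : Submodule D K) ≠ ⊥ := by
    intro h
    have : (1 : K) ∈ (1 : Submodule D K) := ssm_one_iff.2 ⟨1, by simp⟩
    rw [h, Submodule.mem_bot] at this
    exact one_ne_zero this
  apply le_antisymm
  · intro x hx
    rw [ssm_mem_v]
    intro z hz
    have := ssm_S1 hs h0 h1 z hz x hx
    rwa [hsemi, mul_comm] at this
  · intro x hx
    by_contra hxF
    obtain ⟨M, hM, h⟩ := ssm_colon hs hN (hs.ne_bot h0) (hs.star_star h0) hxF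
    have hMp := ssm_prime hs hM
    obtain ⟨a, ha, s, hsM, hl⟩ := ssm_local (K := K) (hP M hM) hF
    have ha0 : a ≠ 0 := by
      rintro rfl
      obtain ⟨f, hf, hf0⟩ := Submodule.exists_mem_ne_zero_of_ne_bot h0
      have := hl _ hf
      simp only [Submodule.span_zero_singleton, Submodule.mem_bot, mul_eq_zero,
        FaithfulSMul.algebraMap_eq_zero_iff] at this
      rcases this with h | h
      · exact hsM (h ▸ M.zero_mem)
      · exact hf0 h
    rw [ssm_mem_v] at hx
    have := hx (algebraMap D K s / a) (by
      intro e he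
      obtain ⟨c, hc⟩ := Submodule.mem_span_singleton.1 (hl e he)
      refine ssm_one_iff.2 ⟨c, ?_⟩
      rw [Algebra.smul_def] at hc
      field_simp
      exact hc)
    obtain ⟨c, hc⟩ := ssm_one_iff.1 this
    apply hsM
    apply h
    apply hs.le_star h0
    have : algebraMap D K s * x = c • a := by
      rw [Algebra.smul_def, hc]
      field_simp
    rw [this]
    exact F.smul_mem _ ha

/-- localization as a subring of `K` -/
noncomputable def ssmLoc (K : Type*) [Field K] [Algebra D K] [IsFractionRing D K]
    (M : Ideal D) [M.IsPrime] : Subalgebra D K :=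
  Localization.subalgebra.ofField K M.primeCompl M.primeCompl_le_nonZeroDivisors

lemma ssm_mem_loc {M : Ideal D} [M.IsPrime] {x : K} :
    x ∈ ssmLoc K M ↔ ∃ s, s ∉ M ∧ ∃ a, algebraMap D K s * x = algebraMap D K a := by
  change (∃ (a s : D) (_ : s ∈ M.primeCompl), x = algebraMap D K a * (algebraMap D K s)⁻¹) ↔ _
  have h0 : ∀ s, s ∉ M → algebraMap D K s ≠ 0 := by
    intro s hs h
    have : s = 0 := by simpa using h
    exact hs (this ▸ M.zero_mem)
  constructor
  · rintro ⟨a, s, hs, rfl⟩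
    have := h0 s hs
    exact ⟨s, hs, a, by field_simp⟩
  · rintro ⟨s, hs, a, h⟩
    have := h0 s hs
    refine ⟨a, s, hs, ?_⟩
    field_simp
    linear_combination h

lemma ssm_loc_dvr {star : Submodule D K → Submodule D K} (hs : IsSemistarOperation star)
    (hsemi : star (1 : Submodule D K) = 1) (hN : StarNoetherian star)
    {M : Ideal D} [hMp : M.IsPrime] (hM0 : M ≠ ⊥)
    (hv : IsValuationDomain (Localization.AtPrime M)) :
    IsDiscreteValuationRing (ssmLoc K M) := by
  have hloc : IsLocalization.AtPrime (ssmLoc K M) M :=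
    Localization.subalgebra.isLocalization_ofField K M.primeCompl M.primeCompl_le_nonZeroDivisors
  have hinj : Function.Injective (algebraMap D (ssmLoc K M)) :=
    IsLocalization.injective _ M.primeCompl_le_nonZeroDivisors
  have hlr : IsLocalRing (ssmLoc K M) := IsLocalization.AtPrime.isLocalRing _ M
  have hpid : IsPrincipalIdealRing (ssmLoc K M) := by
    constructor
    intro A
    obtain ⟨a, ha, s, hsM, h⟩ := ssm_local_ideal hs hsemi hN hv
      (A.comap (algebraMap D (ssmLoc K M)))
    refine ⟨algebraMap D _ a, le_antisymm ?_ ?_⟩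
    · rw [← IsLocalization.map_comap M.primeCompl (ssmLoc K M) A]
      rw [Ideal.map_le_iff_le_comap]
      intro x hx
      obtain ⟨c, hc⟩ := h x hx
      rw [Ideal.mem_comap]
      have hu : IsUnit (algebraMap D (ssmLoc K M) s) :=
        IsLocalization.map_units _ (⟨s, hsM⟩ : M.primeCompl)
      change _ ∈ Ideal.span {algebraMap D (ssmLoc K M) a}
      rw [Ideal.mem_span_singleton, ← hu.dvd_mul_left, ← map_mul, hc, map_mul]
      exact dvd_mul_right _ _
    · change Ideal.span {algebraMap D (ssmLoc K M) a} ≤ A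
      rw [Ideal.span_singleton_le_iff_mem]
      exact ha
  refine { hpid, hlr with not_a_field' := ?_ }
  intro h
  obtain ⟨x, hx, hx0⟩ := Submodule.exists_mem_ne_zero_of_ne_bot hM0
  have := (IsLocalization.AtPrime.to_map_mem_maximal_iff (ssmLoc K M) M x).2 hx
  rw [h, Ideal.mem_bot] at this
  exact hx0 (hinj (by rw [this, map_zero]))

lemma ssm_height {star : Submodule D K → Submodule D K} (hs : IsSemistarOperation star)
    (hsemi : star (1 : Submodule D K) = 1) (hN : StarNoetherian star)
    {M : Ideal D} [hMp : M.IsPrime] (hM0 : M ≠ ⊥)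
    (hv : IsValuationDomain (Localization.AtPrime M)) {P : Ideal D} (hP : P.IsPrime)
    (hP0 : P ≠ ⊥) (hPM : P ≤ M) : P = M := by
  have hdvr := ssm_loc_dvr hs hsemi hN hM0 hv
  have hloc : IsLocalization.AtPrime (ssmLoc K M) M :=
    Localization.subalgebra.isLocalization_ofField K M.primeCompl M.primeCompl_le_nonZeroDivisors
  have hdis : Disjoint (M.primeCompl : Set D) (P : Set D) := by
    rw [Set.disjoint_left]
    intro x hx hxP
    exact hx (hPM hxP)
  have h1 := IsLocalization.isPrime_of_isPrime_disjoint M.primeCompl (ssmLoc K M) P hP hdis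
  have h2 : P.map (algebraMap D (ssmLoc K M)) ≠ ⊥ := by
    intro h
    apply hP0
    rwa [Ideal.map_eq_bot_iff_of_injective
      (IsLocalization.injective _ M.primeCompl_le_nonZeroDivisors)] at h
  have h3 := IsLocalRing.eq_maximalIdeal (h1.isMaximal h2)
  rw [← IsLocalization.comap_map_of_isPrime_disjoint M.primeCompl (ssmLoc K M) hP hdis, h3]
  exact IsLocalization.AtPrime.comap_maximalIdeal (ssmLoc K M) M

lemma ssm_finite {star : Submodule D K → Submodule D K} (hs : IsSemistarOperation star)
    (hsemi : star (1 : Submodule D K) = 1) (hN : StarNoetherian star)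
    (hP : ∀ (M : Ideal D) [M.IsPrime], QuasiStarMaximal star M →
      IsValuationDomain (Localization.AtPrime M)) {I : Ideal D} (hI : QuasiStarIdeal star I) :
    {M | QuasiStarMaximal star M ∧ I ≤ M}.Finite := by
  by_contra hcon
  obtain ⟨J, ⟨hJ, hJf⟩, hmax⟩ := ssm_max_of_set hN
    {I | QuasiStarIdeal star I ∧ ¬ {M | QuasiStarMaximal star M ∧ I ≤ M}.Finite}
    (fun _ h => h.1) ⟨I, hI, hcon⟩
  apply hJf
  by_cases hJp : J.IsPrime
  · refine (Set.finite_singleton J).subset ?_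
    rintro M ⟨hM, hle⟩
    have := ssm_prime hs hM
    exact (ssm_height hs hsemi hN hM.1.1 (hP M hM) hJp hJ.1 hle).symm
  by_cases hJt : J = ⊤
  · refine Set.finite_empty.subset ?_
    rintro M ⟨hM, hle⟩
    rw [hJt] at hle
    exact hM.2.1 (top_le_iff.1 hle)
  have : ∃ a b, a * b ∈ J ∧ a ∉ J ∧ b ∉ J := by
    by_contra! h
    exact hJp ⟨hJt, fun {a b} hab => or_iff_not_imp_left.2 (h a b hab)⟩
  obtain ⟨a, b, hab, ha, hb⟩ := this
  have key : ∀ a, a ∉ J → {M | QuasiStarMaximal star M ∧ ssmCl star (J ⊔ Ideal.span {a}) ≤ M}.Finite := by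
    intro a ha
    by_contra hc
    have hne := ssm_sup_ne hJ.1 a
    have := hmax _ ⟨ssm_cl_quasi hs hne, hc⟩ (le_sup_left.trans (ssm_le_cl hs hne))
    exact ha (this ▸ ssm_le_cl hs hne (ssm_mem_sup J a))
  refine ((key a ha).union (key b hb)).subset ?_
  rintro M ⟨hM, hle⟩
  have hMp := ssm_prime hs hM
  have h2 : ∀ a, a ∈ M → ssmCl star (J ⊔ Ideal.span {a}) ≤ M := fun a ha =>
    ssm_cl_min hs (ssm_sup_ne hJ.1 a) hM.1
      (sup_le hle ((Ideal.span_singleton_le_iff_mem _).2 ha))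
  rcases hMp.mem_or_mem (hle hab) with h | h
  · exact Or.inl ⟨hM, h2 a h⟩
  · exact Or.inr ⟨hM, h2 b h⟩

lemma ssm_forward {star : Submodule D K → Submodule D K} (hs : IsSemistarOperation star)
    (hsemi : star (1 : Submodule D K) = 1) (hD : StarDedekind star) :
    IsKrullDomain D K ∧
      ∀ E : Submodule D K, E ≠ ⊥ → finTypeOp star E = finTypeOp (vOp (D := D) (K := K)) E := by
  obtain ⟨hN, hP'⟩ := hD
  have hP : ∀ (M : Ideal D) [M.IsPrime], QuasiStarMaximal star M →
      IsValuationDomain (Localization.AtPrime M) := fun M _ hM =>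
    hP' M ((ssm_max_iff hs hN M).2 hM)
  constructor
  · refine ⟨{V | ∃ (M : Ideal D) (_ : M.IsPrime), QuasiStarMaximal star M ∧
      V = (ssmLoc K M).toSubring}, ?_, ?_, ?_⟩
    · rintro _ ⟨M, hMp, hM, rfl⟩
      refine ⟨fun d => (ssmLoc K M).algebraMap_mem d, ?_, ?_⟩
      · exact ⟨inferInstanceAs (IsDomain (ssmLoc K M)),
          ssm_loc_dvr hs hsemi hN hM.1.1 (hP M hM)⟩
      · intro x
        obtain ⟨a, b, hb, rfl⟩ := IsFractionRing.div_surjective (A := D) x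
        have hb0 : algebraMap D K b ≠ 0 := by simpa using nonZeroDivisors.ne_zero hb
        exact ⟨_, (ssmLoc K M).algebraMap_mem a, _, (ssmLoc K M).algebraMap_mem b, hb0,
          by field_simp⟩
    · ext x
      simp only [Set.mem_iInter]
      constructor
      · intro h
        by_contra hx
        have h1 : (1 : Submodule D K) ≠ ⊥ := by
          intro h
          have : (1 : K) ∈ (1 : Submodule D K) := ssm_one_iff.2 ⟨1, by simp⟩
          rw [h, Submodule.mem_bot] at this
          exact one_ne_zero this
        obtain ⟨M, hM, hc⟩ := ssm_colon hs hN h1 hsemi (x := x) (fun h => hx (ssm_one_iff.1 h))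
        have hMp := ssm_prime hs hM
        have := h _ ⟨M, hMp, hM, rfl⟩
        obtain ⟨s, hsM, a, ha⟩ := ssm_mem_loc.1 this
        exact hsM (hc s (ssm_one_iff.2 ⟨a, ha.symm⟩))
      · rintro ⟨d, rfl⟩ _ ⟨M, hMp, hM, rfl⟩
        exact (ssmLoc K M).algebraMap_mem d
    · intro d hd
      have hd0 : Ideal.span {d} ≠ ⊥ := by simpa using hd
      have hf := ssm_finite hs hsemi hN hP (ssm_cl_quasi hs hd0)
      classical
      refine (hf.image (fun M => if h : M.IsPrime then (ssmLoc K M).toSubring else ⊤)).subset ?_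
      rintro _ ⟨⟨M, hMp, hM, rfl⟩, hu⟩
      refine ⟨M, ⟨hM, ?_⟩, by simp [hMp]⟩
      apply ssm_cl_min hs hd0 hM.1
      rw [Ideal.span_singleton_le_iff_mem]
      by_contra hdM
      have hd' : algebraMap D K d ≠ 0 := by simpa using hd
      exact hu ⟨(algebraMap D K d)⁻¹, ssm_mem_loc.2 ⟨d, hdM, 1, by rw [map_one]; field_simp⟩,
        by field_simp⟩
  · intro E _
    unfold finTypeOp
    refine iSup_congr fun F => iSup_congr fun h0 => iSup_congr fun hF => iSup_congr fun _ => ?_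
    exact ssm_star_eq_v hs hsemi hN hP h0 hF

end Helpers

section Statement

variable {D : Type*} [CommRing D] [IsDomain D]
variable {K : Type*} [Field K] [Algebra D K] [IsFractionRing D K]

/-- `D` an integral domain, `⋆` a (semi)star operation on `D`
(`D^⋆ = D`). Then `D` is a ⋆-Dedekind domain iff `D` is a Krull domain and `⋆_f = t`
(on every nonzero submodule). -/
theorem starDedekind_iff_krull_and_finType_eq_t
    (star : Submodule D K → Submodule D K) (hstar : IsSemistarOperation star)
    (hsemi : star (1 : Submodule D K) = 1) :
    StarDedekind star ↔
      (IsKrullDomain D K ∧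
        ∀ E : Submodule D K, E ≠ ⊥ → finTypeOp star E = finTypeOp (vOp (D := D) (K := K)) E) := by
  exact ⟨ssm_forward hstar hsemi, fun h => ssm_backward hstar h.1 h.2⟩

end Statement
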